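/- arXiv:1710.10838 — 2 statements merged into one kernel-verified Lean document; each statement's English description precedes it below -/
import Mathlib

section
/- Let p be an odd prime dividing k with k ≥ 10. Then there exists a nonsplit extension 1 → M → H → A_k → 1 with M an elementary abelian p-group, such that H has a faithful permutation representation of degree p·k(k-1)/2. -/
/-!
Let `G` act on a finite set `α` with base point `z`. Lift `g ∈ G` to the pairs `(m, g)` where `m`
is an alternating `1`-chain on the complete graph on `α`, with coefficients in `ℤ/n`, whose boundary
is `[g z] - [z]`. These pairs form an extension of `G` by the group of `1`-cycles, and they act on
the edges labelled by `ℤ/n`, where `(a, b, t)` and `(b, a, -t)` are identified.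

For `α = ι × ℤ/n` let `g` be the shift `(r, t) ↦ (r, t + 1)`, of order `n`; it is even when `n` is
odd. If `(m, g) ^ n = 1`, the sum of `m` over each `g`-orbit of pairs of points vanishes. The
difference `f a - f b` of the second coordinates is constant on these orbits, so
`∑ (f a - f b) m a b = 0`. On the other hand, since `m` is alternating, this sum is twice the
pairing of `f` with the boundary of `m`, that is `2 (f (g z) - f z) = 2`. Hence for odd `n ≠ 1` no
lift of `g` has order `n`, and the extension does not split.
-/

/-- A lift of `elem : G` by a `1`-chain joining the base point `z` to `elem • z`: an alternating
function on pairs of points, whose value at `(a, b)` is the coefficient of the edge oriented from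
`b` to `a`. The field `sum_chain` says that the boundary is `[elem • z] - [z]`. -/
@[ext]
structure ChainLift (G R : Type*) {α : Type*} [Group G] [MulAction G α] [Ring R] [Fintype α]
    [DecidableEq α] (z : α) where
  chain : α → α → R
  elem : G
  chain_self : ∀ a, chain a a = 0
  chain_swap : ∀ a b, chain b a = -chain a b
  sum_chain : ∀ a, ∑ b, chain a b = (if a = elem • z then 1 else 0) - (if a = z then 1 else 0)

namespace ChainLift

section Group

variable {G R α : Type*} [Group G] [MulAction G α] [Ring R] [Fintype α] [DecidableEq α] {z : α}

instance : One (ChainLift G R z) where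
  one :=
    { chain := fun _ _ => 0
      elem := 1
      chain_self := fun _ => rfl
      chain_swap := by simp
      sum_chain := by simp }

instance : Mul (ChainLift G R z) where
  mul x y :=
    { chain := fun a b => x.chain a b + y.chain (x.elem⁻¹ • a) (x.elem⁻¹ • b)
      elem := x.elem * y.elem
      chain_self := by simp [chain_self]
      chain_swap := fun a b => by
        rw [x.chain_swap a b, y.chain_swap (x.elem⁻¹ • a), neg_add]
      sum_chain := fun a => by
        have translated_sum : ∑ b, y.chain (x.elem⁻¹ • a) (x.elem⁻¹ • b) =
            ∑ b, y.chain (x.elem⁻¹ • a) b :=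
          Equiv.sum_comp (MulAction.toPerm x.elem⁻¹) (y.chain (x.elem⁻¹ • a))
        rw [Finset.sum_add_distrib, translated_sum, x.sum_chain, y.sum_chain]
        simp only [inv_smul_eq_iff, mul_smul]
        abel }

instance : Inv (ChainLift G R z) where
  inv x :=
    { chain := fun a b => -x.chain (x.elem • a) (x.elem • b)
      elem := x.elem⁻¹
      chain_self := by simp [chain_self]
      chain_swap := fun a b => by rw [x.chain_swap (x.elem • a)]
      sum_chain := fun a => by
        have translated_sum : ∑ b, x.chain (x.elem • a) (x.elem • b) =
            ∑ b, x.chain (x.elem • a) b :=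
          Equiv.sum_comp (MulAction.toPerm x.elem) (x.chain (x.elem • a))
        rw [Finset.sum_neg_distrib, translated_sum, x.sum_chain]
        simp only [eq_inv_smul_iff, smul_left_cancel_iff]
        abel }

@[simp] lemma one_chain (a b : α) : (1 : ChainLift G R z).chain a b = 0 := rfl

@[simp] lemma one_elem : (1 : ChainLift G R z).elem = 1 := rfl

@[simp] lemma mul_chain (x y : ChainLift G R z) (a b : α) :
    (x * y).chain a b = x.chain a b + y.chain (x.elem⁻¹ • a) (x.elem⁻¹ • b) := rfl

@[simp] lemma mul_elem (x y : ChainLift G R z) : (x * y).elem = x.elem * y.elem := rfl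

@[simp] lemma inv_chain (x : ChainLift G R z) (a b : α) :
    x⁻¹.chain a b = -x.chain (x.elem • a) (x.elem • b) := rfl

@[simp] lemma inv_elem (x : ChainLift G R z) : x⁻¹.elem = x.elem⁻¹ := rfl

instance : Group (ChainLift G R z) :=
  Group.ofLeftAxioms
    (fun x y w => by ext <;> simp [mul_assoc, mul_smul, add_assoc])
    (fun x => by ext <;> simp)
    (fun x => by ext <;> simp)

variable (G R z) in
/-- The projection of the extension `ChainLift G R z` of `G` by the `1`-cycles. -/
def proj : ChainLift G R z →* G where
  toFun := elem
  map_one' := rfl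
  map_mul' _ _ := rfl

@[simp] lemma proj_apply (x : ChainLift G R z) : proj G R z x = x.elem := rfl

lemma proj_surjective : Function.Surjective (proj G R z) := fun g =>
  -- The chain of the lift is the edge from `z` to `g • z`.
  ⟨{ chain := fun a b => (if a = g • z then 1 else 0) * (if b = z then 1 else 0) -
        (if a = z then 1 else 0) * (if b = g • z then 1 else 0)
     elem := g
     chain_self := fun a => by split_ifs <;> simp
     chain_swap := fun a b => by split_ifs <;> simp
     sum_chain := fun a => by simp }, rfl⟩

lemma pow_chain (x : ChainLift G R z) (n : ℕ) (a b : α) :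
    (x ^ n).chain a b =
      ∑ i ∈ Finset.range n, x.chain ((x.elem ^ i)⁻¹ • a) ((x.elem ^ i)⁻¹ • b) := by
  induction n with
  | zero => simp
  | succ n ih =>
    have pow_elem : (x ^ n).elem = x.elem ^ n := map_pow (proj G R z) x n
    rw [pow_succ, mul_chain, ih, Finset.sum_range_succ, pow_elem]

lemma pow_eq_one_of_mem_ker_proj (n : ℕ) [CharP R n] {x : ChainLift G R z}
    (hx : x ∈ (proj G R z).ker) : x ^ n = 1 := by
  have elem_eq : x.elem = 1 := hx
  ext
  · simp [pow_chain, elem_eq]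
  · exact (map_pow (proj G R z) x n).trans (by simp [elem_eq])

lemma commute_of_mem_ker_proj {x y : ChainLift G R z} (hx : x ∈ (proj G R z).ker)
    (hy : y ∈ (proj G R z).ker) : Commute x y := by
  have x_elem : x.elem = 1 := hx
  have y_elem : y.elem = 1 := hy
  ext
  · simp [x_elem, y_elem, add_comm]
  · simp [x_elem, y_elem]

end Group

end ChainLift

section Shift

lemma pow_smul_of_shift {G ι A : Type*} [Monoid G] [AddMonoidWithOne A] [MulAction G (ι × A)]
    {g : G} (hg : ∀ a : ι × A, g • a = (a.1, a.2 + 1)) (i : ℕ) (a : ι × A) :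
    g ^ i • a = (a.1, a.2 + i) := by
  induction i with
  | zero => simp
  | succ i ih => simp [pow_succ', mul_smul, ih, hg, add_assoc]

lemma sum_sum_sub_mul_of_antisymm {α R : Type*} [Fintype α] [Ring R] {m : α → α → R}
    (hm : ∀ a b, m b a = -m a b) (f : α → R) :
    ∑ a, ∑ b, (f a - f b) * m a b = 2 * ∑ a, f a * ∑ b, m a b := by
  have second_endpoint : ∑ a, ∑ b, f b * m a b = -∑ a, ∑ b, f a * m a b := by
    rw [Finset.sum_comm]
    simp_rw [← Finset.sum_neg_distrib, ← mul_neg, ← hm]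
  simp_rw [sub_mul, Finset.sum_sub_distrib, second_endpoint, sub_neg_eq_add, ← two_mul,
    Finset.mul_sum]

lemma sum_sum_mul_eq_zero_of_sum_translates {ι A R : Type*} [Fintype ι] [Fintype A] [AddGroup A]
    [NonUnitalNonAssocSemiring R] (F : A → R) {m : ι × A → ι × A → R}
    (hm : ∀ r s d, ∑ y, m (r, d + y) (s, y) = 0) :
    ∑ a, ∑ b, F (a.2 - b.2) * m a b = 0 := by
  have fixed_fibres (r s : ι) : ∑ w, ∑ y, F (w - y) * m (r, w) (s, y) = 0 := calc
    ∑ w, ∑ y, F (w - y) * m (r, w) (s, y)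
      = ∑ y, ∑ w, F (w - y) * m (r, w) (s, y) := Finset.sum_comm
    _ = ∑ y, ∑ d, F d * m (r, d + y) (s, y) := by
        refine Finset.sum_congr rfl fun y _ => ?_
        rw [← Equiv.sum_comp (Equiv.addRight y)]
        simp
    _ = ∑ d, F d * ∑ y, m (r, d + y) (s, y) := by
        rw [Finset.sum_comm]
        simp only [Finset.mul_sum]
    _ = 0 := by simp only [hm, mul_zero, Finset.sum_const_zero]
  simp only [Fintype.sum_prod_type]
  refine Finset.sum_eq_zero fun r _ => ?_
  rw [Finset.sum_comm]
  exact Finset.sum_eq_zero fun s _ => fixed_fibres r s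

lemma sum_range_zmod_neg {M : Type*} [AddCommMonoid M] (n : ℕ) [NeZero n] (F : ZMod n → M) :
    ∑ i ∈ Finset.range n, F (-(i : ZMod n)) = ∑ y, F y := by
  rw [← Equiv.sum_comp (Equiv.neg (ZMod n)) F]
  refine Finset.sum_nbij' (fun i => (i : ZMod n)) ZMod.val ?_ ?_ ?_ ?_ ?_
  · simp
  · simp [ZMod.val_lt]
  · exact fun i hi => ZMod.val_cast_of_lt (Finset.mem_range.1 hi)
  · simp
  · simp

namespace ChainLift

variable {G ι : Type*} [Group G] [Fintype ι] [DecidableEq ι] {n : ℕ} [NeZero n]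
  [MulAction G (ι × ZMod n)] {z : ι × ZMod n}

lemma sum_chain_translates_eq_zero {x : ChainLift G (ZMod n) z}
    (hshift : ∀ a : ι × ZMod n, x.elem • a = (a.1, a.2 + 1)) (hx : x ^ n = 1)
    (r s : ι) (d : ZMod n) : ∑ y, x.chain (r, d + y) (s, y) = 0 := by
  have inv_pow_smul (i : ℕ) (r : ι) (t : ZMod n) : (x.elem ^ i)⁻¹ • (r, t) = (r, t + -i) := by
    rw [inv_smul_eq_iff, pow_smul_of_shift hshift]
    simp
  calc ∑ y, x.chain (r, d + y) (s, y)
      = ∑ i ∈ Finset.range n, x.chain (r, d + -i) (s, -i) :=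
        (sum_range_zmod_neg n fun y => x.chain (r, d + y) (s, y)).symm
    _ = (x ^ n).chain (r, d) (s, 0) := by simp only [pow_chain, inv_pow_smul, zero_add]
    _ = 0 := by rw [hx, one_chain]

lemma pow_ne_one_of_shift (htwo : (2 : ZMod n) ≠ 0) {x : ChainLift G (ZMod n) z}
    (hshift : ∀ a : ι × ZMod n, x.elem • a = (a.1, a.2 + 1)) : x ^ n ≠ 1 := by
  intro hx
  have boundary_pairing : ∑ a, a.2 * ∑ b, x.chain a b = 1 := by
    simp [sum_chain, mul_sub, Finset.sum_sub_distrib, hshift]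
  apply htwo
  calc (2 : ZMod n) = 2 * ∑ a, a.2 * ∑ b, x.chain a b := by rw [boundary_pairing, mul_one]
    _ = ∑ a, ∑ b, (a.2 - b.2) * x.chain a b :=
        (sum_sum_sub_mul_of_antisymm x.chain_swap Prod.snd).symm
    _ = 0 := sum_sum_mul_eq_zero_of_sum_translates id (sum_chain_translates_eq_zero hshift hx)

end ChainLift

end Shift

lemma not_exists_isComplement'_ker {E G : Type*} [Group E] [Group G] {π : E →* G}
    (hπ : Function.Surjective π) {g : G} {n : ℕ} (hg : g ^ n = 1)
    (hlift : ∀ x, π x = g → x ^ n ≠ 1) : ¬∃ K : Subgroup E, π.ker.IsComplement' K := by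
  rintro ⟨K, hK⟩
  obtain ⟨y, rfl⟩ := hπ g
  obtain ⟨⟨m, h⟩, rfl⟩ := hK.surjective y
  have map_h : π h = π (m * h) := by simp [MonoidHom.mem_ker.1 m.2]
  have pow_mem_ker : (h : E) ^ n ∈ π.ker := by rw [MonoidHom.mem_ker, map_pow, map_h, hg]
  exact hlift h map_h (Subgroup.disjoint_def.1 hK.disjoint pow_mem_ker (pow_mem h.2 n))

section Involution

/-- The equivalence relation whose classes are the orbits `{x, f x}` of an involution. -/
def involutionSetoid {β : Type*} {f : β → β} (hf : f.Involutive) : Setoid β where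
  r x y := x = y ∨ x = f y
  iseqv :=
    { refl := fun _ => Or.inl rfl
      symm := by
        rintro x y (rfl | rfl)
        · exact Or.inl rfl
        · exact Or.inr (hf y).symm
      trans := by
        rintro x y w (rfl | rfl) (rfl | rfl)
        · exact Or.inl rfl
        · exact Or.inr rfl
        · exact Or.inr rfl
        · exact Or.inl (hf w) }

lemma card_eq_two_mul_card_quotient_involutionSetoid {β : Type*} [Finite β] {f : β → β}
    (hf : f.Involutive) (hne : ∀ x, f x ≠ x) :
    Nat.card β = 2 * Nat.card (Quotient (involutionSetoid hf)) := by
  classical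
  have := Fintype.ofFinite β
  have := Fintype.ofFinite (Quotient (involutionSetoid hf))
  have card_fibre (q : Quotient (involutionSetoid hf)) :
      (Finset.univ.filter fun x => Quotient.mk _ x = q).card = 2 := by
    obtain ⟨y, rfl⟩ := q.exists_rep
    rw [← Finset.card_pair (hne y).symm]
    congr 1
    ext x
    simp only [Finset.mem_filter_univ, Finset.mem_insert, Finset.mem_singleton]
    exact Quotient.eq (r := involutionSetoid hf)
  rw [Nat.card_eq_fintype_card, Nat.card_eq_fintype_card, ← Finset.card_univ,
    Finset.card_eq_sum_card_fiberwise (f := Quotient.mk (involutionSetoid hf))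
      (t := Finset.univ) (by simp)]
  simp [card_fibre, mul_comm]

end Involution

/-- The oriented edges of the complete graph on `α`, labelled by `R`. -/
abbrev LabelledDart (α R : Type*) := {e : α × α // e.1 ≠ e.2} × R

namespace LabelledDart

variable {α R : Type*}

/-- Reversal of the orientation, which negates the label. -/
def flip [Neg R] (u : LabelledDart α R) : LabelledDart α R := (⟨u.1.1.swap, u.1.2.symm⟩, -u.2)

lemma flip_involutive [InvolutiveNeg R] :
    Function.Involutive (flip : LabelledDart α R → LabelledDart α R) := fun u => by simp [flip]

lemma flip_ne [Neg R] (u : LabelledDart α R) : u.flip ≠ u := fun h =>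
  u.1.2 (congrArg (fun v => v.1.1.2) h)

lemma card_eq [Finite α] :
    Nat.card (LabelledDart α R) = Nat.card α * (Nat.card α - 1) * Nat.card R := by
  classical
  have := Fintype.ofFinite α
  have card_darts : Nat.card {e : α × α // e.1 ≠ e.2} = Nat.card α * (Nat.card α - 1) := by
    rw [Nat.subtype_card (Finset.univ : Finset α).offDiag (by simp), Finset.offDiag_card,
      Finset.card_univ, Nat.card_eq_fintype_card, Nat.mul_sub_one]
  rw [Nat.card_prod, card_darts]

variable {G : Type*} [Group G] [MulAction G α] [Ring R] [Fintype α] [DecidableEq α] {z : α}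

instance : SMul (ChainLift G R z) (LabelledDart α R) where
  smul x u := (⟨(x.elem • u.1.1.1, x.elem • u.1.1.2), (MulAction.injective x.elem).ne u.1.2⟩,
    u.2 + x.chain (x.elem • u.1.1.1) (x.elem • u.1.1.2))

lemma smul_def (x : ChainLift G R z) (u : LabelledDart α R) :
    x • u = (⟨(x.elem • u.1.1.1, x.elem • u.1.1.2), (MulAction.injective x.elem).ne u.1.2⟩,
      u.2 + x.chain (x.elem • u.1.1.1) (x.elem • u.1.1.2)) := rfl

instance : MulAction (ChainLift G R z) (LabelledDart α R) where
  one_smul u := by simp [smul_def]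
  mul_smul x y u := by simp [smul_def, mul_smul, add_left_comm, add_comm]

lemma smul_flip (x : ChainLift G R z) (u : LabelledDart α R) : x • u.flip = (x • u).flip := by
  simp [smul_def, flip, x.chain_swap (x.elem • u.1.1.1), add_comm]

end LabelledDart

/-- The edges of the complete graph on `α` labelled by `R`, where a label is negated when the edge
is read in the opposite direction. -/
abbrev LabelledEdge (α R : Type*) [InvolutiveNeg R] :=
  Quotient (involutionSetoid (LabelledDart.flip_involutive (α := α) (R := R)))

namespace LabelledEdge

variable {α R : Type*}

lemma card_eq [InvolutiveNeg R] [Finite α] [Finite R] :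
    Nat.card (LabelledEdge α R) = Nat.card R * (Nat.card α * (Nat.card α - 1)) / 2 := by
  rw [mul_comm, ← LabelledDart.card_eq, card_eq_two_mul_card_quotient_involutionSetoid
    LabelledDart.flip_involutive LabelledDart.flip_ne, Nat.mul_div_cancel_left _ two_pos]

variable {G : Type*} [Group G] [MulAction G α] [Ring R] [Fintype α] [DecidableEq α] {z : α}

instance : MulAction (ChainLift G R z) (LabelledEdge α R) where
  smul x := Quotient.map (x • ·) fun u v huv => huv.imp (congrArg (x • ·)) fun h => by
    rw [h, LabelledDart.smul_flip]
  one_smul := Quotient.ind fun u => congrArg _ (one_smul _ u)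
  mul_smul x y := Quotient.ind fun u => congrArg _ (mul_smul x y u)

lemma fixes_or_flips_of_smul_eq {x : ChainLift G R z}
    (hx : ∀ u : LabelledEdge α R, x • u = u) {a b : α} (hab : a ≠ b) :
    x.elem • a = a ∧ x.elem • b = b ∧ x.chain a b = 0 ∨ x.elem • a = b ∧ x.elem • b = a := by
  let u : LabelledDart α R := (⟨(a, b), hab⟩, 0)
  have related : x • u = u ∨ x • u = u.flip := Quotient.exact (hx (Quotient.mk _ u))
  refine related.imp (fun h => ?_) fun h => ?_
  · simp only [u, LabelledDart.smul_def, Prod.mk.injEq, Subtype.mk.injEq, zero_add] at h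
    obtain ⟨⟨ha, hb⟩, hchain⟩ := h
    rw [ha, hb] at hchain
    exact ⟨ha, hb, hchain⟩
  · simpa [u, LabelledDart.smul_def, LabelledDart.flip] using congrArg (fun v => v.1.1) h

lemma faithfulSMul [FaithfulSMul G α] (hα : 3 ≤ Nat.card α) :
    FaithfulSMul (ChainLift G R z) (LabelledEdge α R) := by
  refine faithfulSMul_iff.2 fun x hx => ?_
  have fixes_or_flips {a b : α} (hab : a ≠ b) := fixes_or_flips_of_smul_eq hx hab
  have fixes (a : α) : x.elem • a = a := by
    obtain ⟨b, hba, hb⟩ := ENat.exists_ne_ne_of_three_le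
      (by rw [ENat.card_eq_coe_natCard]; exact_mod_cast hα) a (x.elem • a)
    rcases fixes_or_flips hba.symm with h | h
    · exact h.1
    · exact absurd h.1.symm hb
  ext a b
  · rcases eq_or_ne a b with rfl | hab
    · exact x.chain_self a
    · rcases fixes_or_flips hab with h | h
      · exact h.2.2
      · exact absurd ((fixes a).symm.trans h.1) hab
  · exact faithfulSMul_iff.1 ‹_› x.elem fixes

end LabelledEdge

lemma mem_alternatingGroup_of_odd_pow_eq_one {α : Type*} [Fintype α] [DecidableEq α]
    {σ : Equiv.Perm α} {n : ℕ} (hn : Odd n) (hσ : σ ^ n = 1) : σ ∈ alternatingGroup α := by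
  have sign_pow : Equiv.Perm.sign σ ^ n = 1 := by rw [← map_pow, hσ, map_one]
  rwa [Int.units_pow_eq_pow_mod_two, Nat.odd_iff.1 hn, pow_one] at sign_pow

lemma exists_alternatingGroup_shift (ι : Type*) [Fintype ι] [DecidableEq ι] {n : ℕ} [NeZero n]
    (hn : Odd n) : ∃ g : alternatingGroup (ι × ZMod n),
      g ^ n = 1 ∧ ∀ a : ι × ZMod n, g • a = (a.1, a.2 + 1) := by
  let σ : Equiv.Perm (ι × ZMod n) := (Equiv.refl ι).prodCongr (Equiv.addRight 1)
  have pow_eq_one : σ ^ n = 1 := by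
    ext1 a
    simpa using pow_smul_of_shift (g := σ) (fun _ => rfl) n a
  exact ⟨⟨σ, mem_alternatingGroup_of_odd_pow_eq_one hn pow_eq_one⟩, Subtype.ext pow_eq_one,
    fun _ => rfl⟩

lemma exists_nonsplit_subgroup_perm {E G G' Ω Ω' : Type*} [Group E] [Group G] [Group G']
    [MulAction E Ω] [FaithfulSMul E Ω] (e : Ω ≃ Ω') (f : G ≃* G') {π : E →* G}
    (hπ : Function.Surjective π) {n : ℕ}
    (hpow : ∀ x ∈ π.ker, x ^ n = 1) (hcomm : ∀ x ∈ π.ker, ∀ y ∈ π.ker, x * y = y * x)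
    {g : G} (hg : g ^ n = 1) (hlift : ∀ x, π x = g → x ^ n ≠ 1) :
    ∃ H : Subgroup (Equiv.Perm Ω'), ∃ M : Subgroup H, M.Normal ∧ M ≠ ⊥ ∧
      (∀ x ∈ M, x ^ n = 1) ∧ (∀ x ∈ M, ∀ y ∈ M, x * y = y * x) ∧
      (∃ _ : M.Normal, Nonempty ((H ⧸ M) ≃* G')) ∧ ¬∃ K : Subgroup H, M.IsComplement' K := by
  let φ : E →* Equiv.Perm Ω' := e.permCongrHom.toMonoidHom.comp (MulAction.toPermHom E Ω)
  let ψ : φ.range ≃* E :=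
    (MonoidHom.ofInjective (e.permCongrHom.injective.comp MulAction.toPerm_injective)).symm
  let ρ : φ.range →* G := π.comp ψ.toMonoidHom
  have ρ_surjective : Function.Surjective ρ := hπ.comp ψ.surjective
  have pow_eq_one_iff (x : φ.range) : ψ x ^ n = 1 ↔ x ^ n = 1 := by
    rw [← map_pow, EmbeddingLike.map_eq_one_iff]
  have nonsplit : ¬∃ K : Subgroup φ.range, ρ.ker.IsComplement' K :=
    not_exists_isComplement'_ker ρ_surjective hg fun x hx =>
      (pow_eq_one_iff x).not.1 (hlift (ψ x) hx)
  refine ⟨φ.range, ρ.ker, inferInstance, fun hbot => nonsplit ⟨⊤, ?_⟩,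
    fun x hx => (pow_eq_one_iff x).1 (hpow (ψ x) hx), fun x hx y hy => ψ.injective ?_,
    ⟨inferInstance, ⟨(QuotientGroup.quotientKerEquivOfSurjective ρ ρ_surjective).trans f⟩⟩,
    nonsplit⟩
  · rw [hbot]
    exact Subgroup.isComplement'_bot_top
  · simpa only [map_mul] using hcomm (ψ x) hx (ψ y) hy

theorem exists_nonsplit_extension_perm_rep_odd_general
    (k n : ℕ) (hk : k ≠ 0) (hn : Odd n) (hn_one : n ≠ 1) (hdvd : n ∣ k) :
    ∃ H : Subgroup (Equiv.Perm (Fin (n * (k * (k - 1)) / 2))),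
      ∃ M : Subgroup H, M.Normal ∧ M ≠ ⊥ ∧
        (∀ x ∈ M, x ^ n = 1) ∧ (∀ x ∈ M, ∀ y ∈ M, x * y = y * x) ∧
        (∃ _ : M.Normal, Nonempty ((H ⧸ M) ≃* alternatingGroup (Fin k))) ∧
        ¬ ∃ K : Subgroup H, M.IsComplement' K := by
  obtain ⟨q, rfl⟩ := hdvd
  obtain ⟨hn_zero, hq⟩ := mul_ne_zero_iff.1 hk
  have : NeZero n := ⟨hn_zero⟩
  have : NeZero q := ⟨hq⟩
  have card_points : Nat.card (Fin q × ZMod n) = n * q := by simp [mul_comm]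
  have three_le_card : 3 ≤ Nat.card (Fin q × ZMod n) := by
    rw [card_points]
    exact (show 3 ≤ n by grind).trans (Nat.le_mul_of_pos_right n hq.pos)
  have card_edges : Nat.card (LabelledEdge (Fin q × ZMod n) (ZMod n)) =
      n * (n * q * (n * q - 1)) / 2 := by
    rw [LabelledEdge.card_eq, card_points, Nat.card_zmod]
  have two_ne_zero : ((2 : ℕ) : ZMod n) ≠ 0 := by
    rw [Ne, ZMod.natCast_eq_zero_iff]
    exact fun h => hn_one (Nat.eq_one_of_dvd_coprimes hn.coprime_two_left h dvd_rfl)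
  obtain ⟨g, hg, hshift⟩ := exists_alternatingGroup_shift (Fin q) hn
  let z : Fin q × ZMod n := 0
  have := LabelledEdge.faithfulSMul (G := alternatingGroup (Fin q × ZMod n)) (R := ZMod n)
    (z := z) three_le_card
  exact exists_nonsplit_subgroup_perm (Finite.equivFinOfCardEq card_edges)
    (Finite.equivFinOfCardEq card_points).altCongrHom
    (ChainLift.proj_surjective (G := alternatingGroup (Fin q × ZMod n)) (R := ZMod n) (z := z))
    (fun _ => ChainLift.pow_eq_one_of_mem_ker_proj n)
    (fun _ hx _ hy => ChainLift.commute_of_mem_ker_proj hx hy) hg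
    (by rintro x rfl; exact ChainLift.pow_ne_one_of_shift two_ne_zero hshift)

/-- **Theorem (Guralnick–Liebeck, Theorem 1.2(i)).**
Let `p` be an odd prime dividing `k`, with `k ≥ 10`. Then there is a nonsplit extension
`1 → M → H → A_k → 1` with `M` a nontrivial elementary abelian `p`-group, such that `H`
has a faithful permutation representation of degree `p·k(k-1)/2`; equivalently, `H` can be
realized as a subgroup of the symmetric group of degree `p·k(k-1)/2`. -/
theorem exists_nonsplit_extension_perm_rep_odd
    (k p : ℕ) (hk : 10 ≤ k) (hp : p.Prime) (hodd : Odd p) (hdvd : p ∣ k) :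
    ∃ H : Subgroup (Equiv.Perm (Fin (p * (k * (k - 1)) / 2))),
      ∃ M : Subgroup H, M.Normal ∧ M ≠ ⊥ ∧
        (∀ x ∈ M, x ^ p = 1) ∧ (∀ x ∈ M, ∀ y ∈ M, x * y = y * x) ∧
        (∃ _ : M.Normal, Nonempty ((H ⧸ M) ≃* alternatingGroup (Fin k))) ∧
        ¬ ∃ K : Subgroup H, M.IsComplement' K :=
  exists_nonsplit_extension_perm_rep_odd_general k p (by omega) hodd hp.ne_one hdvd
end

section
/- With k ≥ 10, G = A_k, Y the stabilizer of {1,2}, and P = 𝔽₂↑_Y^G the permutation module on 2-subsets, one has dim H²(G, P) = 2 over 𝔽₂. -/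
open Pointwise

/-- Permutation representation of `G` on `X → F` from an action of `G` on `X`. -/
def permRep (F G X : Type*) [CommRing F] [Group G] [MulAction G X] :
    Representation F G (X → F) where
  toFun g := LinearMap.funLeft F F (fun x => g⁻¹ • x)
  map_one' := by ext v x; simp
  map_mul' g h := by ext v x; simp [LinearMap.funLeft, mul_smul]

/-- The set of 2-element subsets of `{1,…,k}`. -/
def Xk (k : ℕ) := {s : Finset (Fin k) // s.card = 2}

instance (k : ℕ) : Fintype (Xk k) := Subtype.fintype _
instance (k : ℕ) : DecidableEq (Xk k) := Subtype.instDecidableEq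

instance (k : ℕ) : MulAction (Equiv.Perm (Fin k)) (Xk k) where
  smul g s := ⟨g • s.1, by rw [Finset.card_smul_finset]; exact s.2⟩
  one_smul s := Subtype.ext (one_smul _ s.1)
  mul_smul g h s := Subtype.ext (mul_smul g h s.1)

/-!
By the Eckmann–Shapiro lemma the cohomology of the permutation module is that of the stabilizer of a
pair, a symmetric group `S` on at least four letters, with trivial coefficients. A class in `H²(S)`
is a central extension `E → S`. Fix disjoint transpositions `τ`, `σ`. If `τ` has a lift `t` with
`t² = 1` that commutes with a lift of `σ`, then `t` commutes with every element of `E` whose image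
fixes both letters of `τ`, so the conjugates of `t` give a well-defined lift of each transposition.
These lifts are permuted by conjugation as transpositions are, and this already makes them generate
a complement of the kernel, splitting the extension. Hence in characteristic two the square of a
lift of `τ` and the commutator of lifts of `τ` and `σ` determine the class. Both take arbitrary
values: the cup square of the sign has invariants `(1, 0)`. For commutator `1`, assign to each
permutation `g` the product of anticommuting generators indexed by the pairs in its inversion set
`c g`. As `c (g * h) = c g + g • c h` modulo two, the product for `g` times the `g`-translate of the
product for `h` is up to sign the product for `g * h`, and the signs form a cocycle; for disjoint
adjacent transpositions the products are two distinct generators, which anticommute.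
-/

open Equiv

universe u

/-- The relations satisfied by the transpositions `swap i j` of `α`, imposed on a family `t i j` of
elements of a group; they present the finite symmetric groups. -/
structure SwapRelations {α E : Type*} [DecidableEq α] [Group E] (t : α → α → E) : Prop where
  self (i : α) : t i i = 1
  mul_self (i j : α) : t i j * t i j = 1
  conj (i j k l : α) : t i j * t k l * (t i j)⁻¹ = t (swap i j k) (swap i j l)

namespace SwapRelations

variable {α E : Type*} [DecidableEq α] [Group E] {t : α → α → E}

theorem symm (h : SwapRelations t) (i j : α) : t j i = t i j := by
  have hconj := h.conj i j i j
  rwa [mul_inv_cancel_right, swap_apply_left, swap_apply_right, eq_comm] at hconj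

theorem mul_comm_swap (h : SwapRelations t) (i j k l : α) :
    t i j * t k l = t (swap i j k) (swap i j l) * t i j := by
  rw [← h.conj, inv_mul_cancel_right]

theorem prod_swap (h : SwapRelations t) :
    SwapRelations fun i j => ((swap i j, t i j) : Perm α × E) where
  self i := Prod.ext (swap_self i) (h.self i)
  mul_self i j := by simp [h.mul_self]
  conj i j k l := Prod.ext (swap_apply_apply (swap i j) k l).symm (h.conj i j k l)

theorem exists_mul_eq_mul_mem (h : SwapRelations t) {s : Set α} {n i j c : α} {S : Subgroup E}
    (hS : ∀ i ∈ s, ∀ j ∈ s, t i j ∈ S) (hi : i ∈ insert n s) (hj : j ∈ insert n s)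
    (hc : c ∈ insert n s) : ∃ c' ∈ insert n s, ∃ z ∈ S, t i j * t c n = t c' n * z := by
  wlog hin : i ≠ n generalizing i j
  · obtain rfl : i = n := not_not.1 hin
    obtain rfl | hji := eq_or_ne j i
    · exact ⟨c, hc, 1, one_mem S, by simp [h.self]⟩
    · simpa [h.symm i j] using this hj hi hji
  have his : i ∈ s := Set.mem_of_mem_insert_of_ne hi hin
  obtain rfl | hjn := eq_or_ne j n
  · obtain rfl | hcj := eq_or_ne c j
    · exact ⟨i, hi, 1, one_mem S, by simp [h.self]⟩
    obtain rfl | hci := eq_or_ne c i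
    · exact ⟨j, hj, 1, one_mem S, by simp [h.self, h.mul_self]⟩
    refine ⟨c, hc, t i c, hS i his c (Set.mem_of_mem_insert_of_ne hc hcj), ?_⟩
    rw [h.mul_comm_swap c j i c, swap_apply_of_ne_of_ne hci.symm hin, swap_apply_left]
  · refine ⟨swap i j c, ?_, t i j, hS i his j (Set.mem_of_mem_insert_of_ne hj hjn), ?_⟩
    · rw [swap_apply_def]
      split_ifs <;> assumption
    · rw [h.mul_comm_swap i j c n, swap_apply_of_ne_of_ne hin.symm (Ne.symm hjn)]

theorem exists_eq_mul_mem_closure (h : SwapRelations t) {s : Set α} {n : α} {x : E}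
    (hx : x ∈ Subgroup.closure (Set.image2 t (insert n s) (insert n s))) :
    ∃ c ∈ insert n s, ∃ y ∈ Subgroup.closure (Set.image2 t s s), x = t c n * y := by
  have hS : ∀ i ∈ s, ∀ j ∈ s, t i j ∈ Subgroup.closure (Set.image2 t s s) := fun i hi j hj =>
    Subgroup.subset_closure (Set.mem_image2_of_mem hi hj)
  have hstep : ∀ i ∈ insert n s, ∀ j ∈ insert n s, ∀ x,
      (∃ c ∈ insert n s, ∃ y ∈ Subgroup.closure (Set.image2 t s s), x = t c n * y) →
      ∃ c ∈ insert n s, ∃ y ∈ Subgroup.closure (Set.image2 t s s), t i j * x = t c n * y := by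
    rintro i hi j hj _ ⟨c, hc, y, hy, rfl⟩
    obtain ⟨c', hc', z, hz, e⟩ := h.exists_mul_eq_mul_mem hS hi hj hc
    exact ⟨c', hc', z * y, mul_mem hz hy, by rw [← mul_assoc, e, mul_assoc]⟩
  induction hx using Subgroup.closure_induction_left with
  | one => exact ⟨n, Set.mem_insert n s, 1, one_mem _, by simp [h.self]⟩
  | mul_left _ hg x _ ih =>
    obtain ⟨i, hi, j, hj, rfl⟩ := hg
    exact hstep i hi j hj x ih
  | inv_mul_cancel _ hg x _ ih =>
    obtain ⟨i, hi, j, hj, rfl⟩ := hg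
    rw [inv_eq_of_mul_eq_one_left (h.mul_self i j)]
    exact hstep i hi j hj x ih

theorem apply_eq_of_mem_closure (t : α → α → E) {s : Set α} {n : α} (hn : n ∉ s) {x : Perm α × E}
    (hx : x ∈ Subgroup.closure (Set.image2 (fun i j => (swap i j, t i j)) s s)) : x.1 n = n := by
  suffices hle : Subgroup.closure (Set.image2 (fun i j => (swap i j, t i j)) s s) ≤
      (MulAction.stabilizer (Perm α) n).comap (MonoidHom.fst (Perm α) E) from hle hx
  refine (Subgroup.closure_le _).2 ?_
  rintro _ ⟨i, hi, j, hj, rfl⟩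
  exact swap_apply_of_ne_of_ne (ne_of_mem_of_not_mem hi hn).symm (ne_of_mem_of_not_mem hj hn).symm

theorem eq_one_of_mem_closure (h : SwapRelations t) (s : Finset α) {x : Perm α × E}
    (hx : x ∈ Subgroup.closure (Set.image2 (fun i j => (swap i j, t i j)) (s : Set α) s))
    (hx1 : x.1 = 1) : x = 1 := by
  induction s using Finset.induction_on generalizing x with
  | empty => simpa using hx
  | insert n s hn ih =>
    rw [Finset.coe_insert] at hx
    obtain ⟨c, -, y, hy, rfl⟩ := h.prod_swap.exists_eq_mul_mem_closure hx
    have hyn : y.1 n = n := apply_eq_of_mem_closure t (mod_cast hn) hy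
    obtain rfl : c = n := by simpa [hyn] using Perm.congr_fun hx1 n
    rw [h.prod_swap.self, one_mul] at hx1 ⊢
    exact ih hy hx1

theorem exists_monoidHom [Finite α] (h : SwapRelations t) :
    ∃ φ : Perm α →* E, ∀ i j, φ (swap i j) = t i j := by
  have := Fintype.ofFinite α
  let Γ := Subgroup.closure
    (Set.image2 (fun i j => ((swap i j, t i j) : Perm α × E)) Set.univ Set.univ)
  have hΓ (i j : α) : (swap i j, t i j) ∈ Γ :=
    Subgroup.subset_closure (Set.mem_image2_of_mem (Set.mem_univ i) (Set.mem_univ j))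
  have hinj : Function.Injective (Prod.fst ∘ Γ.subtype) :=
    (injective_iff_map_eq_one ((MonoidHom.fst _ _).comp Γ.subtype)).2 fun x hx =>
      Subtype.ext (h.eq_one_of_mem_closure Finset.univ (by simp) hx)
  have hsurj : Function.Surjective (Prod.fst ∘ Γ.subtype) := by
    have hle : Subgroup.closure {σ : Perm α | σ.IsSwap} ≤ Γ.map (MonoidHom.fst _ _) := by
      refine (Subgroup.closure_le _).2 ?_
      rintro _ ⟨i, j, -, rfl⟩
      exact ⟨_, hΓ i j, rfl⟩
    intro σ
    obtain ⟨x, hx, rfl⟩ := hle (Perm.closure_isSwap.ge (Subgroup.mem_top σ))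
    exact ⟨⟨x, hx⟩, rfl⟩
  obtain ⟨φ, hφ⟩ := Subgroup.exists_eq_graph ⟨hinj, hsurj⟩
  exact ⟨φ, fun i j => MonoidHom.mem_graph.1 (hφ ▸ hΓ i j)⟩

end SwapRelations

section CentralExtension

theorem commute_of_map_eq_of_ker_le_center {E H : Type*} [Group E] [Group H] {π : E →* H}
    (hker : π.ker ≤ Subgroup.center E) {x x' y : E} (hx : π x = π x') (hxy : Commute x y) :
    Commute x' y := by
  have hz : x⁻¹ * x' ∈ Subgroup.center E := hker (by simp [MonoidHom.mem_ker, hx])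
  have hzy : Commute (x⁻¹ * x') y := (Subgroup.mem_center_iff.1 hz y).symm
  simpa using hxy.mul_left hzy

theorem exists_perm_apply_eq_apply_eq {α : Type*} {a b i j : α} (hab : a ≠ b) (hij : i ≠ j) :
    ∃ g : Perm α, g a = i ∧ g b = j :=
  MulAction.is_two_pretransitive_iff.1 (Perm.isMultiplyPretransitive α 2) hab hij

variable {α E : Type*} [DecidableEq α] [Group E] {π : E →* Perm α} {a b c d : α} {t u : E}

theorem exists_swapRelations_lift (hπ : Function.Surjective π) (ht : π t = swap a b)
    (hab : a ≠ b) (htt : t * t = 1) (hcomm : ∀ e, π e a = a → π e b = b → Commute e t) :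
    ∃ T : α → α → E, SwapRelations T ∧ ∀ i j, π (T i j) = swap i j := by
  have hlift (i j : α) (hij : i ≠ j) : ∃ e, π e a = i ∧ π e b = j := by
    obtain ⟨g, hg⟩ := exists_perm_apply_eq_apply_eq hab hij
    obtain ⟨e, rfl⟩ := hπ g
    exact ⟨e, hg⟩
  choose! e hea heb using hlift
  let T (i j : α) : E := if i = j then 1 else e i j * t * (e i j)⁻¹
  have hTself (i : α) : T i i = 1 := if_pos rfl
  have hTne {i j : α} (hij : i ≠ j) : T i j = e i j * t * (e i j)⁻¹ := if_neg hij
  have hT (x : E) : T (π x a) (π x b) = x * t * x⁻¹ := by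
    have hne : π x a ≠ π x b := (π x).injective.ne hab
    have hx : Commute (x⁻¹ * e (π x a) (π x b)) t := hcomm _
      (by simp [hea _ _ hne]) (by simp [heb _ _ hne])
    rw [hTne hne, mul_inv_eq_iff_eq_mul]
    simpa [mul_assoc] using congrArg (x * ·) hx.eq
  have hπT (i j : α) : π (T i j) = swap i j := by
    obtain rfl | hij := eq_or_ne i j
    · simp [hTself, Perm.one_def]
    · simp only [hTne hij, map_mul, map_inv, ht]
      rw [← swap_apply_apply, hea i j hij, heb i j hij]
  refine ⟨T, ⟨hTself, fun i j => ?_, fun i j k l => ?_⟩, hπT⟩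
  · obtain rfl | hij := eq_or_ne i j
    · simp [hTself]
    · rw [hTne hij, conj_mul, htt, mul_one, mul_inv_cancel]
  · obtain rfl | hkl := eq_or_ne k l
    · simp [hTself]
    · have hconj := hT (T i j * e k l)
      rw [map_mul, Perm.mul_apply, Perm.mul_apply, hea k l hkl, heb k l hkl, hπT] at hconj
      rw [hconj, hTne hkl]
      group

variable [Finite α]

theorem ofSubtype_mem_map_centralizer (hπ : Function.Surjective π)
    (hker : π.ker ≤ Subgroup.center E) (ht : π t = swap a b) (hu : π u = swap c d)
    (htu : Commute t u) (hc : c ≠ a ∧ c ≠ b) (hd : d ≠ a ∧ d ≠ b) (hcd : c ≠ d)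
    (σ : Perm {x // x ≠ a ∧ x ≠ b}) :
    Perm.ofSubtype σ ∈ (Subgroup.centralizer {t}).map π := by
  suffices hle : Subgroup.closure {τ : Perm {x // x ≠ a ∧ x ≠ b} | τ.IsSwap} ≤
      ((Subgroup.centralizer {t}).map π).comap Perm.ofSubtype from
    hle (Perm.closure_isSwap.ge (Subgroup.mem_top σ))
  rw [Subgroup.closure_le]
  rintro _ ⟨i, j, hij, rfl⟩
  obtain ⟨g, hgi, hgj⟩ := exists_perm_apply_eq_apply_eq (a := ⟨c, hc⟩) (b := ⟨d, hd⟩)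
    (by simpa using hcd) hij
  obtain ⟨e, he⟩ := hπ (Perm.ofSubtype g)
  have hea : π e a = a := he ▸ Perm.ofSubtype_apply_of_not_mem _ (by simp)
  have heb : π e b = b := he ▸ Perm.ofSubtype_apply_of_not_mem _ (by simp)
  have het : π (e * t * e⁻¹) = π t := by
    rw [map_mul, map_mul, map_inv, ht, ← swap_apply_apply, hea, heb]
  have heu : π (e * u * e⁻¹) = Perm.ofSubtype (swap i j) := by
    rw [← hgi, ← hgj, swap_apply_apply]
    simp only [map_mul, map_inv, hu, he, Perm.ofSubtype_swap_eq]
  refine ⟨_, Subgroup.mem_centralizer_singleton_iff.2 ?_, heu⟩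
  exact (commute_of_map_eq_of_ker_le_center hker het ((Commute.conj_iff e).2 htu)).symm

theorem commute_of_map_apply_eq_self (hπ : Function.Surjective π)
    (hker : π.ker ≤ Subgroup.center E) (ht : π t = swap a b) (hu : π u = swap c d)
    (htu : Commute t u) (hc : c ≠ a ∧ c ≠ b) (hd : d ≠ a ∧ d ≠ b) (hcd : c ≠ d) {e : E}
    (hea : π e a = a) (heb : π e b = b) : Commute e t := by
  have hmaps (x : α) : (π e x ≠ a ∧ π e x ≠ b) ↔ (x ≠ a ∧ x ≠ b) := by
    nth_rw 1 [← hea, ← heb]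
    simp only [ne_eq, EmbeddingLike.apply_eq_iff_eq]
  obtain ⟨e', he't, he'⟩ :=
    ofSubtype_mem_map_centralizer hπ hker ht hu htu hc hd hcd ((π e).subtypePerm hmaps)
  rw [Perm.ofSubtype_subtypePerm hmaps fun x hx => by grind] at he'
  exact commute_of_map_eq_of_ker_le_center hker he' (Subgroup.mem_centralizer_singleton_iff.1 he't)

theorem exists_rightInverse_of_commute_lifts_swap (hπ : Function.Surjective π)
    (hker : π.ker ≤ Subgroup.center E) (ht : π t = swap a b) (hu : π u = swap c d)
    (hab : a ≠ b) (hc : c ≠ a ∧ c ≠ b) (hd : d ≠ a ∧ d ≠ b) (hcd : c ≠ d)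
    (htt : t * t = 1) (htu : Commute t u) :
    ∃ s : Perm α →* E, π.comp s = MonoidHom.id (Perm α) := by
  obtain ⟨T, hT, hπT⟩ := exists_swapRelations_lift hπ ht hab htt fun e =>
    commute_of_map_apply_eq_self hπ hker ht hu htu hc hd hcd
  obtain ⟨s, hs⟩ := hT.exists_monoidHom
  refine ⟨s, MonoidHom.eq_of_eqOn_dense Perm.closure_isSwap ?_⟩
  rintro _ ⟨i, j, -, rfl⟩
  simp [hs, hπT]

end CentralExtension

section ExtensionOfCocycle

open groupCohomology

variable {R G : Type u} {V : Type*} [CommRing R] [Group G] [AddCommGroup V] [Module R V]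

theorem mem_cocycles₂_trivial_iff {f : G × G → V} :
    f ∈ cocycles₂ (Rep.trivial R G V) ↔
      ∀ g h j, f (g * h, j) + f (g, h) = f (h, j) + f (g, h * j) :=
  mem_cocycles₂_iff (A := Rep.trivial R G V) f

theorem mem_coboundaries₂_trivial_iff {f : G × G → V} :
    f ∈ coboundaries₂ (Rep.trivial R G V) ↔
      ∃ x : G → V, ∀ g h, x h - x (g * h) + x g = f (g, h) :=
  exists_congr fun _ => funext_iff.trans Prod.forall

/-- The central extension of `G` by `V` defined by a 2-cocycle `f` with trivial action: the set
`V × G` with `(v, g) * (w, h) = (v + w + f (g, h), g * h)`. As `f` is not assumed to be normalised,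
the identity is `(-f (1, 1), 1)`. -/
structure CocycleExtension (f : cocycles₂ (Rep.trivial R G V)) where
  left : V
  right : G

namespace CocycleExtension

variable {f : cocycles₂ (Rep.trivial R G V)}

instance : Mul (CocycleExtension f) where
  mul x y := ⟨x.left + y.left + f (x.right, y.right), x.right * y.right⟩

instance : One (CocycleExtension f) where
  one := ⟨-f (1, 1), 1⟩

instance : Inv (CocycleExtension f) where
  inv x := ⟨-x.left - f (x.right⁻¹, x.right) - f (1, 1), x.right⁻¹⟩

theorem mk_mul_mk (v w : V) (g h : G) :
    (⟨v, g⟩ * ⟨w, h⟩ : CocycleExtension f) = ⟨v + w + f (g, h), g * h⟩ :=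
  rfl

theorem one_def : (1 : CocycleExtension f) = ⟨-f (1, 1), 1⟩ :=
  rfl

theorem inv_mk (v : V) (g : G) :
    (⟨v, g⟩⁻¹ : CocycleExtension f) = ⟨-v - f (g⁻¹, g) - f (1, 1), g⁻¹⟩ :=
  rfl

instance : Group (CocycleExtension f) :=
  Group.ofLeftAxioms
    (by
      rintro ⟨u, g⟩ ⟨v, h⟩ ⟨w, j⟩
      have hf : (f (g * h, j) + f (g, h) : V) = f (h, j) + f (g, h * j) :=
        mem_cocycles₂_trivial_iff.1 f.2 g h j
      simp only [mk_mul_mk, mk.injEq, mul_assoc, and_true]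
      linear_combination (norm := abel) hf)
    (by
      rintro ⟨v, g⟩
      have hf : f (1, g) = f (1, 1) := cocycles₂_map_one_fst f g
      simp [mk_mul_mk, one_def, hf])
    (by
      rintro ⟨v, g⟩
      simp only [mk_mul_mk, one_def, inv_mk, inv_mul_cancel, mk.injEq, and_true]
      abel)

/-- The projection of the extension onto `G`. -/
def rightHom : CocycleExtension f →* G where
  toFun := right
  map_one' := rfl
  map_mul' _ _ := rfl

theorem rightHom_surjective : Function.Surjective (rightHom : CocycleExtension f →* G) :=
  fun g => ⟨⟨0, g⟩, rfl⟩

theorem commute_mk_mk_iff {v w : V} {g h : G} (hgh : Commute g h) :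
    Commute (⟨v, g⟩ : CocycleExtension f) ⟨w, h⟩ ↔ f (g, h) = f (h, g) := by
  rw [commute_iff_eq, mk_mul_mk, mk_mul_mk, mk.injEq, add_comm w v, hgh.eq]
  simp

theorem ker_rightHom_le_center :
    (rightHom : CocycleExtension f →* G).ker ≤ Subgroup.center (CocycleExtension f) := by
  rintro ⟨v, g⟩ (rfl : g = 1)
  refine Subgroup.mem_center_iff.2 fun ⟨w, h⟩ => ?_
  have h1 : f (1, h) = f (1, 1) := cocycles₂_map_one_fst f h
  have h2 : f (h, 1) = f (1, 1) := cocycles₂_map_one_snd f h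
  exact (commute_mk_mk_iff (Commute.one_right h)).2 (h2.trans h1.symm)

theorem mem_coboundaries₂_of_rightInverse (s : G →* CocycleExtension f)
    (hs : rightHom.comp s = MonoidHom.id G) :
    (f : G × G → V) ∈ coboundaries₂ (Rep.trivial R G V) := by
  refine mem_coboundaries₂_trivial_iff.2 ⟨fun g => -(s g).left, fun g h => ?_⟩
  have hright (g : G) : (s g).right = g := DFunLike.congr_fun hs g
  have hmul : (s (g * h)).left = (s g).left + (s h).left + f ((s g).right, (s h).right) :=
    congrArg left (map_mul s g h)
  simp only [hmul, hright]
  abel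

end CocycleExtension

end ExtensionOfCocycle

section QuadraticCocycle

open groupCohomology

theorem permRep_apply {F G X : Type*} [CommRing F] [Group G] [MulAction G X] (g : G) (m : X → F)
    (P : X) : permRep F G X g m P = m (g⁻¹ • P) :=
  rfl

theorem permRep_single {F G X : Type*} [CommRing F] [Group G] [MulAction G X] [DecidableEq X]
    (g : G) (P : X) (r : F) : permRep F G X g (Pi.single P r) = Pi.single (g • P) r := by
  funext Q
  simp only [permRep_apply, Pi.single_apply, inv_smul_eq_iff]

theorem mem_cocycles₂_of_quadratic {R G : Type u} {V : Type*} [CommRing R] [Group G]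
    [AddCommGroup V] [Module R V] (ρ : Representation R G V) (B : LinearMap.BilinForm R V)
    {q : G → V → R} (hq_add : ∀ g v w, q g (v + w) = q g v + q g w + (B (ρ g v) (ρ g w) - B v w))
    (hq_mul : ∀ g h v, q (g * h) v = q h v + q g (ρ h v))
    {c : G → V} (hc : ∀ g h, c (g * h) = c g + ρ g (c h)) :
    (fun x : G × G => B (c x.1) (ρ x.1 (c x.2)) + q x.1 (c x.2)) ∈
      cocycles₂ (Rep.trivial R G R) := by
  refine mem_cocycles₂_trivial_iff.2 fun g h j => ?_
  simp only [hc, hq_add, hq_mul, map_add, map_mul, LinearMap.add_apply, Module.End.mul_apply]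
  ring

variable {R G X : Type*} [CommRing R] [Group G] [MulAction G X] [LinearOrder X]

theorem ite_inversion_add_ite_inversion [CharP R 2] (g : G) (P Q : X) (r : R) :
    ((if P < Q ∧ g • Q < g • P then r else 0) + if Q < P ∧ g • P < g • Q then r else 0) =
      (if g • Q < g • P then r else 0) - if Q < P then r else 0 := by
  obtain rfl | hPQ := eq_or_ne P Q
  · simp
  · have hg : g • P ≠ g • Q := (MulAction.injective g).ne hPQ
    rcases hPQ.lt_or_gt with h | h <;> rcases hg.lt_or_gt with h' | h' <;>
      simp [h, h', h.not_gt, h'.not_gt, CharTwo.neg_eq]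

variable [Fintype X]

/-- The bilinear form `∑_{Q < P} v P * w Q`: the sign of the product of two ordered monomials in
anticommuting variables indexed by `X`. -/
def orderForm (R X : Type*) [CommRing R] [Fintype X] [LinearOrder X] :
    LinearMap.BilinForm R (X → R) :=
  Matrix.toBilin' (Matrix.of fun P Q => if Q < P then 1 else 0)

/-- The quadratic form `∑ v P * v Q` over the pairs `P < Q` whose order is reversed by `g`: the
sign by which `g` acts on an ordered monomial in anticommuting variables indexed by `X`. -/
def inversionForm (g : G) (v : X → R) : R :=
  ∑ P, ∑ Q, if P < Q ∧ g • Q < g • P then v P * v Q else 0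

theorem orderForm_apply (v w : X → R) :
    orderForm R X v w = ∑ P, ∑ Q, if Q < P then v P * w Q else 0 := by
  simp [orderForm, Matrix.toBilin'_apply]

theorem orderForm_permRep (g : G) (v w : X → R) :
    orderForm R X (permRep R G X g v) (permRep R G X g w) =
      ∑ P, ∑ Q, if g • Q < g • P then v P * w Q else 0 := by
  rw [orderForm_apply, ← Equiv.sum_comp (MulAction.toPerm g)]
  refine Finset.sum_congr rfl fun P _ => ?_
  rw [← Equiv.sum_comp (MulAction.toPerm g)]
  simp [permRep_apply]

theorem orderForm_single [DecidableEq X] (P Q : X) :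
    orderForm R X (Pi.single P 1) (Pi.single Q 1) = if Q < P then 1 else 0 := by
  rw [orderForm_apply, Finset.sum_eq_single_of_mem P (Finset.mem_univ P) (by simp +contextual),
    Finset.sum_eq_single_of_mem Q (Finset.mem_univ Q) (by simp +contextual)]
  simp

theorem inversionForm_single [DecidableEq X] (g : G) (P : X) (r : R) :
    inversionForm g (Pi.single P r) = 0 := by
  refine Finset.sum_eq_zero fun Q _ => Finset.sum_eq_zero fun S _ => ?_
  split_ifs with h
  · obtain rfl | hQ := eq_or_ne Q P
    · rw [Pi.single_eq_of_ne h.1.ne', mul_zero]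
    · rw [Pi.single_eq_of_ne hQ, zero_mul]
  · rfl

theorem inversionForm_add [CharP R 2] (g : G) (v w : X → R) :
    inversionForm g (v + w) = inversionForm g v + inversionForm g w +
      (orderForm R X (permRep R G X g v) (permRep R G X g w) - orderForm R X v w) := by
  have hexpand : inversionForm g (v + w) = inversionForm g v + inversionForm g w +
      ((∑ P, ∑ Q, if P < Q ∧ g • Q < g • P then v P * w Q else 0) +
        ∑ P, ∑ Q, if P < Q ∧ g • Q < g • P then w P * v Q else 0) := by
    simp only [inversionForm, ← Finset.sum_add_distrib]
    refine Finset.sum_congr rfl fun P _ => Finset.sum_congr rfl fun Q _ => ?_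
    split_ifs
    · simp only [Pi.add_apply]
      ring
    · simp
  have hswap : (∑ P, ∑ Q, if P < Q ∧ g • Q < g • P then w P * v Q else 0) =
      ∑ P, ∑ Q, if Q < P ∧ g • P < g • Q then v P * w Q else 0 := by
    rw [Finset.sum_comm]
    simp only [mul_comm]
  rw [hexpand, hswap, orderForm_permRep, orderForm_apply]
  simp only [← Finset.sum_add_distrib, ← Finset.sum_sub_distrib, ite_inversion_add_ite_inversion]

-- The defect is additive in `v` and vanishes on multiples of the standard basis vectors.
theorem inversionForm_mul [CharP R 2] (g h : G) (v : X → R) :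
    inversionForm (g * h) v = inversionForm h v + inversionForm g (permRep R G X h v) := by
  classical
  let D : (X → R) →+ R := AddMonoidHom.mk'
    (fun v => inversionForm (g * h) v - inversionForm h v - inversionForm g (permRep R G X h v))
    fun v w => by
      simp only [inversionForm_add, map_add, map_mul, Module.End.mul_apply]
      ring
  have hD : D = 0 := AddMonoidHom.functions_ext _ _ _ fun P r => by
    simp [D, permRep_single, inversionForm_single]
  have hv : inversionForm (g * h) v - inversionForm h v - inversionForm g (permRep R G X h v) = 0 :=
    DFunLike.congr_fun hD v
  rwa [sub_sub, sub_eq_zero] at hv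

end QuadraticCocycle

theorem swap_lt_swap_of_covBy {α : Type*} [LinearOrder α] {i j x y : α} (hij : i ⋖ j)
    (hxy : x < y) (h : ¬(x = i ∧ y = j)) : swap i j x < swap i j y := by
  obtain rfl | hxi := eq_or_ne x i
  · have hyj : y ≠ j := fun e => h ⟨rfl, e⟩
    rw [swap_apply_left, swap_apply_of_ne_of_ne hxy.ne' hyj]
    exact (hij.ge_of_gt hxy).lt_of_ne' hyj
  obtain rfl | hyj := eq_or_ne y j
  · rw [swap_apply_right, swap_apply_of_ne_of_ne hxi hxy.ne]
    exact (hij.le_of_lt hxy).lt_of_ne hxi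
  obtain rfl | hxj := eq_or_ne x j
  · rw [swap_apply_right, swap_apply_of_ne_of_ne (hij.lt.trans hxy).ne' hyj]
    exact hij.lt.trans hxy
  obtain rfl | hyi := eq_or_ne y i
  · rw [swap_apply_left, swap_apply_of_ne_of_ne hxi hxj]
    exact hxy.trans hij.lt
  · rwa [swap_apply_of_ne_of_ne hxi hxj, swap_apply_of_ne_of_ne hyi hyj]

namespace Xk

variable {n : ℕ}

theorem apply_mem_smul_iff {g : Perm (Fin n)} {P : Xk n} {x : Fin n} :
    g x ∈ (g • P).1 ↔ x ∈ P.1 :=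
  Finset.smul_mem_smul_finset_iff g

theorem mem_inv_smul_iff {g : Perm (Fin n)} {P : Xk n} {x : Fin n} :
    x ∈ (g⁻¹ • P).1 ↔ g x ∈ P.1 :=
  Finset.mem_inv_smul_finset_iff

/-- The pair `{i, j}`. -/
def pair (i j : Fin n) (hij : i ≠ j) : Xk n :=
  ⟨{i, j}, Finset.card_pair hij⟩

theorem mem_pair {i j : Fin n} {hij : i ≠ j} {x : Fin n} :
    x ∈ (pair i j hij).1 ↔ x = i ∨ x = j := by
  simp [pair]

theorem eq_pair {P : Xk n} {i j : Fin n} (hij : i ≠ j) (hi : i ∈ P.1) (hj : j ∈ P.1) :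
    P = pair i j hij :=
  Subtype.ext (Finset.eq_of_subset_of_card_le
    (by simp [pair, Finset.insert_subset_iff, hi, hj]) (P.2.trans (pair i j hij).2.symm).le).symm

theorem smul_pair (g : Perm (Fin n)) {i j : Fin n} (hij : i ≠ j) :
    g • pair i j hij = pair (g i) (g j) (g.injective.ne hij) :=
  eq_pair _ (apply_mem_smul_iff.2 (mem_pair.2 (.inl rfl)))
    (apply_mem_smul_iff.2 (mem_pair.2 (.inr rfl)))

theorem swap_smul_pair {i j : Fin n} (hij : i ≠ j) : swap i j • pair i j hij = pair i j hij := by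
  rw [smul_pair]
  exact eq_pair _ (mem_pair.2 (.inr (swap_apply_right i j).symm))
    (mem_pair.2 (.inl (swap_apply_left i j).symm))

/-- The smaller element of a pair. -/
def min (P : Xk n) : Fin n :=
  P.1.min' (Finset.card_pos.1 (P.2.symm ▸ two_pos))

theorem min_mem (P : Xk n) : P.min ∈ P.1 :=
  Finset.min'_mem _ _

theorem min_smul {g : Perm (Fin n)} {P : Xk n} (h : ∀ x ∈ P.1, P.min < x → g P.min < g x) :
    (g • P).min = g P.min := by
  refine le_antisymm (Finset.min'_le _ _ (apply_mem_smul_iff.2 P.min_mem)) ?_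
  obtain ⟨x, hx⟩ := g.surjective (g • P).min
  have hxP : x ∈ P.1 := apply_mem_smul_iff.1 (hx ▸ (g • P).min_mem)
  rw [← hx]
  obtain hlt | heq := (Finset.min'_le _ _ hxP).lt_or_eq
  · exact (h x hxP hlt).le
  · exact (congrArg g heq).le

variable {R : Type*} [CommRing R]

/-- The indicator function of the set of pairs on which `g⁻¹` reverses the order. -/
def inversion (R : Type*) [CommRing R] (g : Perm (Fin n)) (P : Xk n) : R :=
  if g (g⁻¹ • P).min = P.min then 0 else 1

theorem ite_eq_add_ite_eq [CharP R 2] {P : Xk n} {a b c : Fin n} (ha : a ∈ P.1) (hb : b ∈ P.1)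
    (hc : c ∈ P.1) : (if c = a then (0 : R) else 1) =
      (if b = a then 0 else 1) + if c = b then 0 else 1 := by
  obtain ⟨x, y, hxy, hP⟩ := Finset.card_eq_two.1 P.2
  simp only [hP, Finset.mem_insert, Finset.mem_singleton] at ha hb hc
  rcases ha with rfl | rfl <;> rcases hb with rfl | rfl <;> rcases hc with rfl | rfl <;>
    simp [hxy, hxy.symm, CharTwo.add_self_eq_zero]

theorem inversion_mul [CharP R 2] (g h : Perm (Fin n)) :
    inversion R (g * h) = inversion R g + permRep R (Perm (Fin n)) (Xk n) g (inversion R h) := by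
  funext P
  have hb : g (g⁻¹ • P).min ∈ P.1 := mem_inv_smul_iff.1 (min_mem _)
  have hc : (g * h) ((g * h)⁻¹ • P).min ∈ P.1 := mem_inv_smul_iff.1 (min_mem _)
  rw [inversion, ite_eq_add_ite_eq P.min_mem hb hc]
  simp [inversion, permRep_apply, mul_smul]

theorem inversion_swap {i j : Fin n} (hij : i ⋖ j) :
    inversion R (swap i j) = Pi.single (pair i j hij.ne) 1 := by
  funext P
  rw [inversion, swap_inv, Pi.single_apply]
  obtain rfl | hP := eq_or_ne P (pair i j hij.ne)
  · rw [swap_smul_pair, if_neg, if_pos rfl]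
    rcases mem_pair.1 (pair i j hij.ne).min_mem with h | h <;> simp [h, hij.ne, hij.ne']
  · rw [if_neg hP, if_pos]
    suffices h : (swap i j • swap i j • P).min = swap i j (swap i j • P).min by
      rw [← h, smul_smul, swap_mul_self, one_smul]
    refine min_smul fun x hx hlt => swap_lt_swap_of_covBy hij hlt fun ⟨hi, hj⟩ => hP ?_
    have hmin := (swap i j • P).min_mem
    rw [hi] at hmin
    have hpair : swap i j • P = pair i j hij.ne := eq_pair _ hmin (hj ▸ hx)
    rw [← swap_smul_pair hij.ne, ← hpair, smul_smul, swap_mul_self, one_smul]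

end Xk

section CocyclesOfPerm

open groupCohomology

variable {R : Type} [CommRing R] [CharP R 2] {n : ℕ}

theorem exists_mem_cocycles₂_swap_sub_swap_eq_one {a b c d : Fin n} (hab : a ⋖ b) (hcd : c ⋖ d)
    (hc : c ≠ a ∧ c ≠ b) (hd : d ≠ a ∧ d ≠ b) :
    ∃ f ∈ cocycles₂ (Rep.trivial R (Perm (Fin n)) R),
      f (swap a b, swap c d) - f (swap c d, swap a b) = 1 := by
  let _ : LinearOrder (Xk n) := LinearOrder.lift' (Fintype.equivFin (Xk n))
    (Fintype.equivFin (Xk n)).injective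
  refine ⟨_, mem_cocycles₂_of_quadratic (permRep R (Perm (Fin n)) (Xk n)) (orderForm R (Xk n))
    inversionForm_add inversionForm_mul Xk.inversion_mul, ?_⟩
  have hne : Xk.pair a b hab.ne ≠ Xk.pair c d hcd.ne := fun h => by
    have hmem : c ∈ (Xk.pair a b hab.ne).1 := h ▸ Xk.mem_pair.2 (.inl rfl)
    exact (Xk.mem_pair.1 hmem).elim hc.1 hc.2
  have habcd : swap a b • Xk.pair c d hcd.ne = Xk.pair c d hcd.ne := by
    simp only [Xk.smul_pair, swap_apply_of_ne_of_ne hc.1 hc.2, swap_apply_of_ne_of_ne hd.1 hd.2]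
  have hcdab : swap c d • Xk.pair a b hab.ne = Xk.pair a b hab.ne := by
    simp only [Xk.smul_pair, swap_apply_of_ne_of_ne hc.1.symm hd.1.symm,
      swap_apply_of_ne_of_ne hc.2.symm hd.2.symm]
  simp only [Xk.inversion_swap hab, Xk.inversion_swap hcd, permRep_single, habcd, hcdab,
    orderForm_single, inversionForm_single, add_zero]
  rcases hne.lt_or_gt with h | h <;> simp [h, h.not_gt, CharTwo.neg_eq]

theorem exists_mem_cocycles₂_swap_self_sub_one_eq_one {α : Type} [Finite α] [DecidableEq α] :
    ∃ f ∈ cocycles₂ (Rep.trivial R (Perm α) R),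
      (∀ a b, a ≠ b → f (swap a b, swap a b) - f (1, 1) = 1) ∧ ∀ g h, f (g, h) = f (h, g) := by
  have := Fintype.ofFinite α
  let s (g : Perm α) : R := if Perm.sign g = 1 then 0 else 1
  have hs (g h : Perm α) : s (g * h) = s g + s h := by
    rcases Int.units_eq_one_or (Perm.sign g) with hg | hg <;>
      rcases Int.units_eq_one_or (Perm.sign h) with hh | hh <;>
      simp [s, hg, hh, CharTwo.add_self_eq_zero]
  refine ⟨fun x => s x.1 * s x.2, mem_cocycles₂_trivial_iff.2 fun g h j => ?_, fun a b hab => ?_,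
    fun g h => mul_comm _ _⟩
  · simp only [hs]
    ring
  · simp [s, Perm.sign_swap hab]

end CocyclesOfPerm

section SecondCohomology

open groupCohomology

/-- The invariants `(f (τ, τ) - f (1, 1), f (τ, σ) - f (σ, τ))` of a 2-cocycle `f`. When `τ ^ 2 = 1`
and `τ`, `σ` commute they are, up to sign in characteristic two, the square of a lift of `τ` and the
commutator of lifts of `τ` and `σ` in the central extension defined by `f`. -/
def liftInvariants (R : Type u) {G : Type u} [CommRing R] [Group G] (τ σ : G) :
    cocycles₂ (Rep.trivial R G R) →ₗ[R] R × R where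
  toFun f := (f (τ, τ) - f (1, 1), f (τ, σ) - f (σ, τ))
  map_add' _ _ := Prod.ext (add_sub_add_comm _ _ _ _) (add_sub_add_comm _ _ _ _)
  map_smul' r _ := Prod.ext (mul_sub r _ _).symm (mul_sub r _ _).symm

theorem liftInvariants_eq_zero_of_mem_coboundaries₂ {R G : Type u} [CommRing R] [CharP R 2]
    [Group G] {τ σ : G} (hτ : τ * τ = 1) (hτσ : Commute τ σ) {f : cocycles₂ (Rep.trivial R G R)}
    (hf : (f : G × G → R) ∈ coboundaries₂ (Rep.trivial R G R)) : liftInvariants R τ σ f = 0 := by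
  obtain ⟨x, hx⟩ := mem_coboundaries₂_trivial_iff.1 hf
  have hsq : f (τ, τ) - f (1, 1) = 0 := by
    rw [← hx, ← hx, hτ, mul_one]
    linear_combination (x τ - x 1) * CharTwo.two_eq_zero (R := R)
  have hcomm : f (τ, σ) - f (σ, τ) = 0 := by
    rw [← hx, ← hx, hτσ.eq]
    ring
  exact Prod.ext hsq hcomm

theorem commute_swap_swap {α : Type*} [DecidableEq α] {a b c d : α} (hc : c ≠ a ∧ c ≠ b)
    (hd : d ≠ a ∧ d ≠ b) : Commute (swap a b) (swap c d) :=
  Perm.Disjoint.commute fun x => by grind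

theorem mem_coboundaries₂_of_liftInvariants_eq_zero {R α : Type u} [CommRing R] [CharP R 2]
    [DecidableEq α] [Finite α] {a b c d : α} (hab : a ≠ b) (hc : c ≠ a ∧ c ≠ b)
    (hd : d ≠ a ∧ d ≠ b) (hcd : c ≠ d) {f : cocycles₂ (Rep.trivial R (Perm α) R)}
    (hf : liftInvariants R (swap a b) (swap c d) f = 0) :
    (f : Perm α × Perm α → R) ∈ coboundaries₂ (Rep.trivial R (Perm α) R) := by
  have hsq : f (swap a b, swap a b) = f (1, 1) := sub_eq_zero.1 (congrArg Prod.fst hf)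
  have hcomm : f (swap a b, swap c d) = f (swap c d, swap a b) :=
    sub_eq_zero.1 (congrArg Prod.snd hf)
  let t : CocycleExtension f := ⟨0, swap a b⟩
  let u : CocycleExtension f := ⟨0, swap c d⟩
  have htt : t * t = 1 := by
    rw [CocycleExtension.mk_mul_mk, CocycleExtension.one_def, hsq, swap_mul_self, add_zero,
      zero_add, CharTwo.neg_eq]
  have htu : Commute t u :=
    (CocycleExtension.commute_mk_mk_iff (commute_swap_swap hc hd)).2 hcomm
  obtain ⟨s, hs⟩ := exists_rightInverse_of_commute_lifts_swap
    CocycleExtension.rightHom_surjective CocycleExtension.ker_rightHom_le_center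
    (t := t) (u := u) rfl rfl hab hc hd hcd htt htu
  exact CocycleExtension.mem_coboundaries₂_of_rightInverse s hs

theorem liftInvariants_surjective {R : Type} [CommRing R] [CharP R 2] {n : ℕ} {a b c d : Fin n}
    (hab : a ⋖ b) (hcd : c ⋖ d) (hc : c ≠ a ∧ c ≠ b) (hd : d ≠ a ∧ d ≠ b) :
    Function.Surjective (liftInvariants R (swap a b) (swap c d)) := by
  obtain ⟨f₁, hf₁, hsq, hsymm⟩ :=
    exists_mem_cocycles₂_swap_self_sub_one_eq_one (R := R) (α := Fin n)
  obtain ⟨f₂, hf₂, hcomm⟩ := exists_mem_cocycles₂_swap_sub_swap_eq_one (R := R) hab hcd hc hd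
  let r := f₂ (swap a b, swap a b) - f₂ (1, 1)
  have h₁ : liftInvariants R (swap a b) (swap c d) ⟨f₁, hf₁⟩ = (1, 0) :=
    Prod.ext (hsq a b hab.ne) (sub_eq_zero.2 (hsymm _ _))
  have h₂ : liftInvariants R (swap a b) (swap c d) ⟨f₂, hf₂⟩ = (r, 1) := Prod.ext rfl hcomm
  intro ⟨x, y⟩
  refine ⟨(x - y * r) • ⟨f₁, hf₁⟩ + y • ⟨f₂, hf₂⟩, ?_⟩
  rw [map_add, map_smul, map_smul, h₁, h₂]
  simp

theorem finrank_groupCohomology_two_perm {R : Type} [CommRing R] [CharP R 2] {n : ℕ} (hn : 4 ≤ n) :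
    Module.finrank R (groupCohomology (Rep.trivial R (Perm (Fin n)) R) 2) = 2 := by
  let a : Fin n := ⟨0, by omega⟩
  let b : Fin n := ⟨1, by omega⟩
  let c : Fin n := ⟨2, by omega⟩
  let d : Fin n := ⟨3, by omega⟩
  have hab : a ⋖ b := by simp [a, b]
  have hcd : c ⋖ d := by simp [c, d]
  have hc : c ≠ a ∧ c ≠ b := by simp [a, b, c]
  have hd : d ≠ a ∧ d ≠ b := by simp [a, b, d]
  let Φ := liftInvariants R (swap a b) (swap c d)
  let π : cocycles₂ (Rep.trivial R (Perm (Fin n)) R) →ₗ[R] H2 (Rep.trivial R (Perm (Fin n)) R) :=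
    (H2π _).hom
  have hπ : Function.Surjective π := (ModuleCat.epi_iff_surjective _).1 inferInstance
  have hker : LinearMap.ker π = LinearMap.ker Φ := by
    ext f
    rw [LinearMap.mem_ker, LinearMap.mem_ker]
    exact (H2π_eq_zero_iff f).trans
      ⟨liftInvariants_eq_zero_of_mem_coboundaries₂ (swap_mul_self a b) (commute_swap_swap hc hd),
        mem_coboundaries₂_of_liftInvariants_eq_zero hab.ne hc hd hcd.ne⟩
  have := CharP.nontrivial_of_char_ne_one (R := R) (v := 2) (by decide)
  calc Module.finrank R (H2 (Rep.trivial R (Perm (Fin n)) R))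
    _ = Module.finrank R (R × R) :=
      (((π.quotKerEquivOfSurjective hπ).symm.trans (Submodule.quotEquivOfEq _ _ hker)).trans
        (Φ.quotKerEquivOfSurjective (liftInvariants_surjective hab hcd hc hd))).finrank_eq
    _ = 2 := by simp

end SecondCohomology

section EckmannShapiro

open CategoryTheory

variable (R : Type u) {G X : Type u} [CommRing R] [Group G] [MulAction G X]

/-- The intertwining map from the permutation module on `X` to the module coinduced from the
trivial module of the stabilizer of `P`, sending `v` to the function `g ↦ v (g⁻¹ • P)`. -/
def permRepToCoind (P : X) :
    (permRep R G X).IntertwiningMap (Representation.coind (MulAction.stabilizer G P).subtype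
      (Rep.trivial R (MulAction.stabilizer G P) R).ρ) where
  toFun v := ⟨fun g => v (g⁻¹ • P), fun s g => by
    have hs : (s : G)⁻¹ • P = P := inv_smul_eq_iff.2 s.2.symm
    simp [mul_smul, hs]⟩
  map_add' _ _ := rfl
  map_smul' _ _ := rfl
  isIntertwining' g := LinearMap.ext fun v => Subtype.ext <| funext fun h => by
    change v (g⁻¹ • h⁻¹ • P) = v ((h * g)⁻¹ • P)
    rw [mul_inv_rev, mul_smul]

variable [MulAction.IsPretransitive G X]

theorem permRepToCoind_bijective (P : X) :
    Function.Bijective (permRepToCoind R (G := G) P) := by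
  refine ⟨fun v w h => funext fun Q => ?_, fun f => ?_⟩
  · obtain ⟨g, rfl⟩ := MulAction.exists_smul_eq G P Q
    have hg : v (g⁻¹⁻¹ • P) = w (g⁻¹⁻¹ • P) := congrFun (congrArg Subtype.val h) g⁻¹
    rwa [inv_inv] at hg
  · choose γ hγ using MulAction.exists_smul_eq G P
    refine ⟨fun Q => f.1 (γ Q)⁻¹, Subtype.ext (funext fun g => ?_)⟩
    have hs : (γ (g⁻¹ • P))⁻¹ * g⁻¹ ∈ MulAction.stabilizer G P := by
      rw [MulAction.mem_stabilizer_iff, mul_smul, inv_smul_eq_iff, hγ]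
    change f.1 (γ (g⁻¹ • P))⁻¹ = f.1 g
    simpa using f.2 ⟨_, hs⟩ g

/-- The Eckmann–Shapiro isomorphism for the permutation module on a transitive `G`-set. -/
noncomputable def groupCohomologyPermRepIso (P : X) (n : ℕ) :
    groupCohomology (Rep.of (permRep R G X)) n ≅
      groupCohomology (Rep.trivial R (MulAction.stabilizer G P) R) n :=
  (groupCohomology.functor R G n).mapIso (Rep.mkIso
    ((permRepToCoind R P).ofBijective (permRepToCoind_bijective R P))) ≪≫
    groupCohomology.coindIso _ n

/-- The isomorphism induced by an isomorphism of groups on cohomology with trivial coefficients. -/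
noncomputable def groupCohomologyTrivialIso {H : Type u} [Group H] (e : G ≃* H) (n : ℕ) :
    groupCohomology (Rep.trivial R G R) n ≅ groupCohomology (Rep.trivial R H R) n :=
  groupCohomology.mapIso (B := Rep.trivial R G R) (A := Rep.trivial R H R) e (LinearEquiv.refl R R)
    (fun _ => rfl) n

end EckmannShapiro

section Stabilizer

theorem toPermHom_stabilizer_compl_bijective {α : Type*} [Fintype α] [DecidableEq α]
    {s : Finset α} (hs : s.card = 2) :
    Function.Bijective (MulAction.toPermHom
      (MulAction.stabilizer (alternatingGroup α) (s : Set α)ᶜ) ((s : Set α)ᶜ : Set α)) := by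
  constructor
  · refine (injective_iff_map_eq_one _).2 fun g hg => ?_
    have hsupp : g.1.1.support ⊆ s := fun x hx => by
      by_contra hxs
      have hgx := congrArg Subtype.val (DFunLike.congr_fun hg ⟨x, by simpa using hxs⟩)
      exact Perm.mem_support.1 hx hgx
    have hcard : g.1.1.support.card ≤ 2 := hs ▸ Finset.card_le_card hsupp
    obtain hlt | heq := hcard.lt_or_eq
    · exact Subtype.ext (Subtype.ext (Perm.card_support_le_one.1 (Nat.le_of_lt_succ hlt)))
    · have hsign : Perm.sign g.1.1 = -1 := (Perm.card_support_eq_two.1 heq).sign_eq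
      rw [Perm.mem_alternatingGroup.1 g.1.2] at hsign
      exact absurd hsign (by decide)
  · exact alternatingGroup.stabilizer.surjective_toPerm (by
      rw [compl_compl]
      exact Finset.one_lt_card_iff_nontrivial.1 (hs ▸ one_lt_two))

namespace Xk

variable {k : ℕ}

theorem isPretransitive_alternatingGroup (hk : 3 ≤ k) :
    MulAction.IsPretransitive (alternatingGroup (Fin k)) (Xk k) :=
  Set.powersetCard.isPretransitive_alternatingGroup (n := 2) (by simpa using hk)

theorem stabilizer_eq_stabilizer_compl (P : Xk k) :
    MulAction.stabilizer (alternatingGroup (Fin k)) P =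
      MulAction.stabilizer (alternatingGroup (Fin k)) (P.1 : Set (Fin k))ᶜ := by
  rw [stabilizer_compl, MulAction.stabilizer_coe_finset]
  ext g
  exact Subtype.ext_iff

/-- The stabilizer of a pair in the alternating group is the symmetric group on its complement. -/
noncomputable def stabilizerEquivPerm (P : Xk k) :
    MulAction.stabilizer (alternatingGroup (Fin k)) P ≃* Perm (Fin (k - 2)) :=
  have hcard : Fintype.card ((P.1 : Set (Fin k))ᶜ : Set (Fin k)) = k - 2 := by
    rw [Fintype.card_compl_set, Fintype.card_fin]
    simp [P.2]
  ((MulEquiv.subgroupCongr P.stabilizer_eq_stabilizer_compl).trans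
    (MulEquiv.ofBijective _ (toPermHom_stabilizer_compl_bijective P.2))).trans
      (Fintype.equivFinOfCardEq hcard).permCongrHom

end Xk

end Stabilizer

theorem dim_H2_perm_module_eq_two_general (R : Type) [CommRing R] [CharP R 2] (k : ℕ)
    (hk : 6 ≤ k) :
    Module.finrank R
      (groupCohomology (Rep.of (permRep R (alternatingGroup (Fin k)) (Xk k))) 2) = 2 := by
  have := Xk.isPretransitive_alternatingGroup (k := k) (by omega)
  let P : Xk k := Xk.pair ⟨0, by omega⟩ ⟨1, by omega⟩ (by simp)
  let i := groupCohomologyPermRepIso R (G := alternatingGroup (Fin k)) P 2 ≪≫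
    groupCohomologyTrivialIso R P.stabilizerEquivPerm 2
  exact i.toLinearEquiv.finrank_eq.trans (finrank_groupCohomology_two_perm (by omega))

/-- **(Guralnick–Liebeck, Lemma 4.1(ii).)** For `k ≥ 10`, `G = A_k` and
`P = 𝔽₂↑_Y^G` the permutation module of `G` on 2-subsets of `{1,…,k}` over `𝔽₂`
(where `Y ≅ S_{k-2}` is the stabilizer of a 2-subset), the second cohomology group
`H²(G, P)` has dimension 2 over `𝔽₂`. -/
theorem dim_H2_perm_module_eq_two (k : ℕ) (hk : 10 ≤ k) :
    Module.finrank (ZMod 2)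
      (groupCohomology (Rep.of (permRep (ZMod 2) (alternatingGroup (Fin k)) (Xk k))) 2)
      = 2 := by
  exact dim_H2_perm_module_eq_two_general (ZMod 2) k (by omega)
end
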